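/- arXiv:1810.01255 — 2 statements merged into one kernel-verified Lean document; each statement's English description precedes it below -/
import Mathlib

section
/- Let Π ⊆ ℝ² be a convex hexagon and let P₁, …, P_N ⊆ ℝ² be convex polytopes (convex hulls of finite sets), each of which is either empty or has nonempty interior, such that ⋃ₙ Pₙ = Π and interior(Pₙ) ∩ interior(Pₘ) = ∅ whenever n ≠ m. If νₙ denotes the number of extreme points of Pₙ, then ν₁ + ⋯ + ν_N ≤ 6N. -/
open Metric

noncomputable section

/-- The Euclidean plane. -/
abbrev Pt := EuclideanSpace ℝ (Fin 2)

/-- A convex hexagon: a compact convex subset of the plane with nonempty interior having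
exactly 6 extreme points. -/
def IsConvexHexagon (s : Set Pt) : Prop :=
  IsCompact s ∧ Convex ℝ s ∧ (interior s).Nonempty ∧ (Set.extremePoints ℝ s).ncard = 6

/-!
Choose a linear functional `f ≠ 0` that separates all vertices of the tiles. A vertex of a tile is
transversal if the level line of `f` through it enters the interior of that tile; in each nonempty
tile, only the two vertices where `f` is extremal fail to be transversal.

Let `p` be a vertex of `k` tiles, transversal for `c` of them. Transversal tiles at `p` occupy
different sides of `p` on the level line, so `c ≤ 2`. If `p` is not a vertex of the tiled body `H`,
then moreover `c < k`: otherwise all tiles containing `p` are transversal there, and either a single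
tile agrees with `H` near `p`, or `p` lies between interior points of two tiles, which then cover a
neighbourhood of `p`. In the first case `p` would be a vertex of `H`; in the second each of the two
tiles is a half-plane near `p`, so `p` is a vertex of neither. Hence `3 c ≤ 2 k` away from the
vertices of `H`. At a vertex of `H` we have `k ≥ 1` and `c ≤ 1`, with `c = 0` unless the vertex is
transversal for `H`. With Iverson brackets, in all cases
`3 c + 2 [p vertex of H] ≤ 2 k + 3 [p transversal vertex of H]`.

If `K` is the sum of the numbers of vertices of the `N` tiles and `h` is the number of vertices of
`H`, summing over `p` gives `3 (K - 2 N) + 2 h ≤ 2 K + 3 (h - 2)`, that is `K + 6 ≤ 6 N + h`.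
-/

open Set Filter Module Topology

section OrderedField

variable {𝕜 E : Type*} [Field 𝕜] [LinearOrder 𝕜] [IsStrictOrderedRing 𝕜] [AddCommGroup E]
  [Module 𝕜 E] {A : Set E} {p v x y z : E}

lemma eq_zero_of_mem_extremePoints (hp : p ∈ extremePoints 𝕜 A) (hadd : p + v ∈ A)
    (hsub : p - v ∈ A) : v = 0 := by
  have hmid : p ∈ openSegment 𝕜 (p + v) (p - v) :=
    ⟨1 / 2, 1 / 2, by simp, by simp, by ring, by module⟩
  simpa using hp.2 hadd hsub hmid

lemma mem_extremePoints_of_add_sub (hA : Convex 𝕜 A) (hp : p ∈ A)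
    (h : ∀ v, p + v ∈ A → p - v ∈ A → v = 0) : p ∈ extremePoints 𝕜 A := by
  refine ⟨hp, ?_⟩
  rintro x hx y hy ⟨a, b, ha, hb, hab, rfl⟩
  obtain rfl : a = 1 - b := eq_sub_of_add_eq hab
  have hv : ((1 - b) * b) • (x - y) = 0 := by
    refine h _ ?_ ?_
    · convert hA hx hy (a := 1 - b ^ 2) (b := b ^ 2) (by nlinarith) (by positivity)
        (by ring) using 1
      module
    · convert hA hx hy (a := (1 - b) ^ 2) (b := 1 - (1 - b) ^ 2) (by positivity) (by nlinarith)
        (by ring) using 1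
      module
  obtain rfl : x = y := by
    simpa [ha.ne', hb.ne', sub_eq_zero] using hv
  module

lemma sameRay_sub_of_mem_segment (hy : p ∈ segment 𝕜 x y) (hz : p ∈ segment 𝕜 x z)
    (hx : x ≠ p) : SameRay 𝕜 (y - p) (z - p) :=
  (mem_segment_iff_sameRay.1 hy).symm.trans (mem_segment_iff_sameRay.1 hz)
    fun h => (hx (sub_eq_zero.1 h).symm).elim

lemma sameRay_or_mem_segment {f : Dual 𝕜 E} (hE : finrank 𝕜 E = 2) (hf : f ≠ 0)
    (hx : f x = f p) (hy : f y = f p) : SameRay 𝕜 (x - p) (y - p) ∨ p ∈ segment 𝕜 x y := by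
  have : FiniteDimensional 𝕜 E := .of_finrank_eq_succ hE
  have hker : finrank 𝕜 (LinearMap.ker f) = 1 := by
    have := Dual.finrank_ker_add_one_of_ne_zero hf
    lia
  obtain rfl | hxp := eq_or_ne x p
  · exact .inr (left_mem_segment 𝕜 x y)
  let u : LinearMap.ker f := ⟨x - p, by simp [hx]⟩
  have hu : u ≠ 0 := by simpa [u, sub_eq_zero] using hxp
  obtain ⟨c, hc⟩ := (finrank_eq_one_iff_of_nonzero' u hu).1 hker ⟨y - p, by simp [hy]⟩
  replace hc : c • (x - p) = y - p := congrArg Subtype.val hc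
  rcases le_total 0 c with hc0 | hc0
  · exact .inl (hc ▸ SameRay.sameRay_nonneg_smul_right _ hc0)
  · refine .inr (mem_segment_iff_sameRay.2 ?_)
    rw [← hc, ← neg_sub x p, ← sameRay_neg_iff, neg_neg, ← neg_smul]
    exact SameRay.sameRay_nonneg_smul_right _ (neg_nonneg.2 hc0)

end OrderedField

section TopologicalVectorSpace

variable {E : Type*} [AddCommGroup E] [Module ℝ E] [TopologicalSpace E] [IsTopologicalAddGroup E]
  [ContinuousSMul ℝ E] {A B : Set E} {f : StrongDual ℝ E} {p x y : E}

lemma subset_closure_interior (hA : Convex ℝ A) (hi : (interior A).Nonempty) :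
    A ⊆ closure (interior A) :=
  subset_closure.trans (hA.closure_interior_eq_closure_of_nonempty_interior hi).ge

lemma eventually_add_smul_mem {s : Set E} (hs : s ∈ 𝓝 p) (v : E) :
    ∀ᶠ t in 𝓝[>] (0 : ℝ), p + t • v ∈ s := by
  have hc : Continuous fun t : ℝ => p + t • v := by fun_prop
  exact nhdsWithin_le_nhds (hc.continuousAt.preimage_mem_nhds (by simpa using hs))

lemma mem_extremePoints_of_eventually {H : Set E} (hH : Convex ℝ H) (hAH : A ⊆ H)
    (hp : p ∈ extremePoints ℝ A) (hloc : ∀ᶠ x in 𝓝 p, x ∈ H → x ∈ A) :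
    p ∈ extremePoints ℝ H := by
  refine mem_extremePoints_of_add_sub hH (hAH hp.1) fun v hadd hsub => ?_
  have hsmall : ∀ w, p + w ∈ H → ∀ᶠ t in 𝓝[>] (0 : ℝ), p + t • w ∈ A := fun w hw => by
    filter_upwards [eventually_add_smul_mem hloc w, Ioo_mem_nhdsGT one_pos] with t ht ht01
    exact ht (hH.add_smul_mem (hAH hp.1) hw ⟨ht01.1.le, ht01.2.le⟩)
  obtain ⟨t, ⟨hadd', hsub'⟩, ht : 0 < t⟩ :=
    (((hsmall v hadd).and (hsmall (-v) (by rwa [← sub_eq_add_neg]))).and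
      self_mem_nhdsWithin).exists
  have htv : t • v = 0 :=
    eq_zero_of_mem_extremePoints hp hadd' (by rwa [smul_neg, ← sub_eq_add_neg] at hsub')
  exact (smul_eq_zero.1 htv).resolve_left ht.ne'

lemma exists_mem_interior_of_sameRay (hA : Convex ℝ A) (hB : Convex ℝ B) (hpA : p ∈ A)
    (hpB : p ∈ B) (hx : x ∈ interior A) (hy : y ∈ B) (hyp : y ≠ p)
    (hxy : SameRay ℝ (x - p) (y - p)) : ∃ z ∈ interior A, z ∈ B := by
  obtain ⟨u, a, b, ha, hb, hab, hau, hbu⟩ := hxy.exists_eq_smul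
  have hb0 : 0 < b := hb.lt_of_ne' (by rintro rfl; simp [sub_eq_zero, hyp] at hbu)
  have hz : b • (x - p) = a • (y - p) := by rw [hau, hbu, smul_comm]
  exact ⟨p + b • (x - p), hA.add_smul_sub_mem_interior hpA hx ⟨hb0, by linarith⟩,
    hz ▸ hB.add_smul_sub_mem hpB hy ⟨ha, by linarith⟩⟩

lemma Ioo_subset_image_interior (hA : Convex ℝ A) (hi : (interior A).Nonempty) (hx : x ∈ A)
    (hy : y ∈ A) : Ioo (f x) (f y) ⊆ f '' interior A := by
  intro r ⟨hxr, hry⟩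
  have hdense := subset_closure_interior hA hi
  obtain ⟨a, har, ha⟩ :=
    mem_closure_iff.1 (hdense hx) _ (isOpen_Iio.preimage f.continuous) hxr
  obtain ⟨b, hbr, hb⟩ :=
    mem_closure_iff.1 (hdense hy) _ (isOpen_Ioi.preimage f.continuous) hry
  exact hA.interior.isPreconnected.intermediate_value ha hb f.continuous.continuousOn
    ⟨le_of_lt har, le_of_lt hbr⟩

lemma image_interior_eq_Ioo (hf : f ≠ 0) (hA : Convex ℝ A) (hi : (interior A).Nonempty)
    (hx : x ∈ A) (hy : y ∈ A) (hmin : ∀ z ∈ A, f x ≤ f z) (hmax : ∀ z ∈ A, f z ≤ f y) :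
    f '' interior A = Ioo (f x) (f y) := by
  refine (image_subset_iff.2 ?_).antisymm (Ioo_subset_image_interior hA hi hx hy)
  rw [← interior_Icc, (f.isOpenMap_of_ne_zero hf).preimage_interior_eq_interior_preimage
    f.continuous]
  exact interior_mono fun z hz => ⟨hmin z hz, hmax z hz⟩

lemma mem_image_interior_or_exists_of_notMem_extremePoints (hA : Convex ℝ A)
    (hi : (interior A).Nonempty) (hp : p ∈ A) (hpA : p ∉ extremePoints ℝ A) :
    f p ∈ f '' interior A ∨ ∃ v ≠ 0, f v = 0 ∧ p + v ∈ A ∧ p - v ∈ A := by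
  obtain ⟨v, hadd, hsub, hv⟩ : ∃ v, p + v ∈ A ∧ p - v ∈ A ∧ v ≠ 0 := by
    contrapose! hpA
    exact mem_extremePoints_of_add_sub hA hp hpA
  rcases lt_trichotomy (f v) 0 with hfv | hfv | hfv
  · exact .inl (Ioo_subset_image_interior hA hi hadd hsub ⟨by simpa, by simpa [sub_eq_add_neg]⟩)
  · exact .inr ⟨v, hv, hfv, hadd, hsub⟩
  · exact .inl (Ioo_subset_image_interior hA hi hsub hadd ⟨by simpa, by simpa⟩)

lemma exists_eventually_le_imp_mem_of_union_mem_nhds (hA : Convex ℝ A) (hB : Convex ℝ B)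
    (hAc : IsClosed A) (hi : (interior A).Nonempty) (hAB : Disjoint (interior A) B) (hpA : p ∈ A)
    (hpB : p ∈ B) (hnhds : A ∪ B ∈ 𝓝 p) :
    ∃ g : StrongDual ℝ E, ∀ᶠ x in 𝓝 p, g x ≤ g p → x ∈ A := by
  obtain ⟨g, c, hgA, hgB⟩ := geometric_hahn_banach_open hA.interior isOpen_interior hB hAB
  have hg : g ≠ 0 := by
    rintro rfl
    obtain ⟨a, ha⟩ := hi
    simpa using (hgA a ha).trans_le (hgB p hpB)
  obtain rfl : g p = c := by
    refine le_antisymm ?_ (hgB p hpB)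
    exact closure_minimal (fun x hx => (hgA x hx).le) (isClosed_Iic.preimage g.continuous)
      (subset_closure_interior hA hi hpA)
  have hclosure : closure (g ⁻¹' Iio (g p)) = g ⁻¹' Iic (g p) := by
    rw [← (g.isOpenMap_of_ne_zero hg).preimage_closure_eq_closure_preimage g.continuous,
      closure_Iio]
  refine ⟨g, ?_⟩
  filter_upwards [interior_mem_nhds.2 hnhds] with x hx hgx
  rw [← hAc.closure_eq]
  refine closure_mono ?_ (isOpen_interior.inter_closure ⟨hx, hclosure.ge hgx⟩)
  rintro z ⟨hz, hgz⟩
  exact (interior_subset hz).resolve_right fun hzB => (hgB z hzB).not_gt hgz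

lemma notMem_extremePoints_of_union_mem_nhds (hE : 1 < finrank ℝ E) (hA : Convex ℝ A)
    (hB : Convex ℝ B) (hAc : IsClosed A) (hi : (interior A).Nonempty)
    (hAB : Disjoint (interior A) B) (hpB : p ∈ B) (hnhds : A ∪ B ∈ 𝓝 p) :
    p ∉ extremePoints ℝ A := by
  intro hp
  obtain ⟨g, hg⟩ :=
    exists_eventually_le_imp_mem_of_union_mem_nhds hA hB hAc hi hAB hp.1 hpB hnhds
  have : FiniteDimensional ℝ E := .of_finrank_pos (by lia)
  obtain ⟨v, hgv, hv⟩ : ∃ v, g v = 0 ∧ v ≠ 0 :=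
    Submodule.exists_mem_ne_zero_of_ne_bot
      (LinearMap.ker_ne_bot_of_finrank_lt (f := g.toLinearMap) (by simpa))
  obtain ⟨t, ⟨hadd, hsub⟩, ht : 0 < t⟩ := (((eventually_add_smul_mem hg v).and
    (eventually_add_smul_mem hg (-v))).and self_mem_nhdsWithin).exists
  have htv : t • v = 0 := eq_zero_of_mem_extremePoints hp (hadd (by simp [hgv]))
    (by simpa [sub_eq_add_neg, hgv] using hsub)
  exact hv ((smul_eq_zero.1 htv).resolve_left ht.ne')

end TopologicalVectorSpace

section Counting

variable {ι α : Type*} {V : Finset α}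

lemma ncard_eq_sum_indicator {S : Set α} (hS : S ⊆ V) :
    S.ncard = ∑ p ∈ V, S.indicator 1 p := by
  lift S to Finset α using V.finite_toSet.subset hS
  rw [ncard_coe_finset, Finset.card_eq_sum_ones]
  exact (Finset.sum_indicator_subset 1 (Finset.coe_subset.1 hS)).symm

lemma sum_ncard_eq_sum_ncard_setOf_mem [Fintype ι] {S : ι → Set α} (hS : ∀ i, S i ⊆ V) :
    ∑ i, (S i).ncard = ∑ p ∈ V, {i | p ∈ S i}.ncard := by
  have hι (p : α) : {i | p ∈ S i}.ncard = ∑ i, {i | p ∈ S i}.indicator 1 i :=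
    ncard_eq_sum_indicator (by simp)
  simp only [hι, ncard_eq_sum_indicator (hS _)]
  exact Finset.sum_comm

end Counting

section NormedSpace

variable {E : Type*} [NormedAddCommGroup E] [NormedSpace ℝ E] {A : Set E} {f : StrongDual ℝ E}

lemma exists_mem_extremePoints_forall_le (hA : IsCompact A) (hne : A.Nonempty)
    (f : StrongDual ℝ E) : ∃ p ∈ extremePoints ℝ A, ∀ x ∈ A, f x ≤ f p := by
  have hface : IsExposed ℝ A (f.toExposed A) := ContinuousLinearMap.toExposed.isExposed
  obtain ⟨z, hz, hmax⟩ := hA.exists_isMaxOn hne f.continuous.continuousOn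
  obtain ⟨p, hp⟩ := (hface.isCompact hA).extremePoints_nonempty ⟨z, hz, hmax⟩
  exact ⟨p, hface.isExtreme.extremePoints_subset_extremePoints hp, hp.1.2⟩

lemma exists_strongDual_ne_zero_injOn [FiniteDimensional ℝ E] [Nontrivial E] {V : Set E}
    (hV : V.Finite) : ∃ f : StrongDual ℝ E, f ≠ 0 ∧ InjOn f V := by
  obtain ⟨w, hw⟩ := exists_ne (0 : E)
  have := (hV.offDiag.insert (w, 0)).to_subtype
  obtain ⟨g, hg⟩ := exists_dual_forall_apply_ne_zero (K := ℝ)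
    (fun q : ↥(insert (w, (0 : E)) V.offDiag) => q.1.1 - q.1.2) fun ⟨q, hq⟩ => by
      rcases hq with rfl | hq
      · simpa using hw
      · exact sub_ne_zero.2 hq.2.2
  refine ⟨LinearMap.toContinuousLinearMap g, fun h => hg ⟨(w, 0), mem_insert _ _⟩ ?_, ?_⟩
  · simpa using DFunLike.congr_fun h w
  · intro x hx y hy hxy
    by_contra hne
    exact hg ⟨(x, y), mem_insert_of_mem _ ⟨hx, hy, hne⟩⟩ (by simpa [sub_eq_zero] using hxy)

/-- The vertices of `A` at which the level line of `f` enters the interior of `A`. For a convex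
polygon and generic `f`, these are all vertices but the two at which `f` is extremal. -/
def transversalVertices (f : StrongDual ℝ E) (A : Set E) : Set E :=
  {p ∈ extremePoints ℝ A | f p ∈ f '' interior A}

lemma transversalVertices_subset : transversalVertices f A ⊆ extremePoints ℝ A :=
  sep_subset _ _

lemma ncard_transversalVertices_add_two (hf : f ≠ 0) (hA : Convex ℝ A) (hAc : IsCompact A)
    (hi : (interior A).Nonempty) (hfin : (extremePoints ℝ A).Finite)
    (hinj : InjOn f (extremePoints ℝ A)) :
    (transversalVertices f A).ncard + 2 = (extremePoints ℝ A).ncard := by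
  obtain ⟨p, hp, hmin⟩ :=
    exists_mem_extremePoints_forall_le hAc (hi.mono interior_subset) (-f)
  obtain ⟨q, hq, hmax⟩ := exists_mem_extremePoints_forall_le hAc (hi.mono interior_subset) f
  replace hmin : ∀ x ∈ A, f p ≤ f x := by simpa using hmin
  have himage := image_interior_eq_Ioo hf hA hi hp.1 hq.1 hmin hmax
  have hpq : f p < f q := nonempty_Ioo.1 (himage ▸ hi.image f)
  have hdiff : extremePoints ℝ A \ transversalVertices f A = {p, q} := by
    ext x
    constructor
    · rintro ⟨hx, hxT⟩
      have hIoo : f x ∉ Ioo (f p) (f q) := fun h => hxT ⟨hx, himage ▸ h⟩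
      rcases (hmin x hx.1).eq_or_lt with hpx | hpx
      · exact .inl (hinj hx hp hpx.symm)
      · exact .inr (hinj hx hq ((hmax x hx.1).eq_of_not_lt fun hxq => hIoo ⟨hpx, hxq⟩))
    · rintro (rfl | rfl)
      · exact ⟨hp, fun h => (himage ▸ h.2).1.false⟩
      · exact ⟨hq, fun h => (himage ▸ h.2).2.false⟩
  have hne : p ≠ q := fun h => hpq.ne (congrArg f h)
  rw [← ncard_sdiff_add_ncard_of_subset transversalVertices_subset hfin, hdiff, ncard_pair hne,
    add_comm]

end NormedSpace

/-- `P` is a tiling of `H` by compact convex sets. A tile may be empty, but a nonempty tile must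
have nonempty interior. -/
structure IsConvexTiling {ι E : Type*} [NormedAddCommGroup E] [NormedSpace ℝ E] (P : ι → Set E)
    (H : Set E) : Prop where
  convex : ∀ i, Convex ℝ (P i)
  isCompact : ∀ i, IsCompact (P i)
  interior_nonempty : ∀ i, (P i).Nonempty → (interior (P i)).Nonempty
  iUnion_eq : ⋃ i, P i = H
  disjoint_interior : Pairwise fun i j => Disjoint (interior (P i)) (interior (P j))

namespace IsConvexTiling

variable {ι E : Type*} [NormedAddCommGroup E] [NormedSpace ℝ E] {P : ι → Set E} {H : Set E}
  {f : StrongDual ℝ E} {i j k : ι} {p x y : E}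

lemma subset (h : IsConvexTiling P H) (i : ι) : P i ⊆ H :=
  h.iUnion_eq ▸ subset_iUnion P i

lemma exists_mem (h : IsConvexTiling P H) (hx : x ∈ H) : ∃ i, x ∈ P i :=
  mem_iUnion.1 (h.iUnion_eq ▸ hx)

lemma eq_of_mem_interior (h : IsConvexTiling P H) (hxi : x ∈ interior (P i)) (hxj : x ∈ P j) :
    i = j := by
  by_contra hij
  have hclosure := subset_closure_interior (h.convex j) (h.interior_nonempty j ⟨x, hxj⟩) hxj
  exact ((h.disjoint_interior hij).closure_right isOpen_interior).notMem_of_mem_left hxi hclosure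

lemma eq_of_sameRay (h : IsConvexTiling P H) (hpi : p ∈ P i) (hpj : p ∈ P j)
    (hx : x ∈ interior (P i)) (hy : y ∈ P j) (hyp : y ≠ p) (hxy : SameRay ℝ (x - p) (y - p)) :
    i = j := by
  obtain ⟨z, hzi, hzj⟩ :=
    exists_mem_interior_of_sameRay (h.convex i) (h.convex j) hpi hpj hx hy hyp hxy
  exact h.eq_of_mem_interior hzi hzj

lemma ne_of_mem_interior (h : IsConvexTiling P H) (hij : i ≠ j) (hx : x ∈ interior (P i))
    (hp : p ∈ P j) : x ≠ p :=
  fun hxp => hij (h.eq_of_mem_interior hx (hxp ▸ hp))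

lemma mem_segment_of_ne (h : IsConvexTiling P H) (hE : finrank ℝ E = 2) (hf : f ≠ 0)
    (hij : i ≠ j) (hpi : p ∈ P i) (hpj : p ∈ P j) (hx : x ∈ interior (P i)) (hy : y ∈ P j)
    (hfx : f x = f p) (hfy : f y = f p) : p ∈ segment ℝ x y := by
  have hf' : (f : Dual ℝ E) ≠ 0 := fun h0 => hf (ContinuousLinearMap.coe_injective h0)
  obtain rfl | hyp := eq_or_ne y p
  · exact right_mem_segment ℝ x y
  · exact (sameRay_or_mem_segment hE hf' hfx hfy).resolve_left fun hxy =>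
      hij (h.eq_of_sameRay hpi hpj hx hy hyp hxy)

lemma eq_or_eq_of_mem_image_interior (h : IsConvexTiling P H) (hE : finrank ℝ E = 2)
    (hf : f ≠ 0) (hij : i ≠ j) (hpi : p ∈ P i) (hpj : p ∈ P j) (hpk : p ∈ P k)
    (hfi : f p ∈ f '' interior (P i)) (hfj : f p ∈ f '' interior (P j))
    (hfk : f p ∈ f '' interior (P k)) : k = i ∨ k = j := by
  obtain ⟨⟨x, hx, hfx⟩, ⟨y, hy, hfy⟩, z, hz, hfz⟩ := And.intro hfi (And.intro hfj hfk)
  refine or_iff_not_imp_left.2 fun hki => ?_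
  have hzp : z ≠ p := h.ne_of_mem_interior hki hz hpi
  have hyz : SameRay ℝ (y - p) (z - p) := sameRay_sub_of_mem_segment
    (h.mem_segment_of_ne hE hf hij hpi hpj hx (interior_subset hy) hfx hfy)
    (h.mem_segment_of_ne hE hf (Ne.symm hki) hpi hpk hx (interior_subset hz) hfx hfz)
    (h.ne_of_mem_interior hij hx hpj)
  exact (h.eq_of_sameRay hpj hpk hy (interior_subset hz) hzp hyz).symm

lemma ncard_setOf_mem_transversalVertices_le_two (h : IsConvexTiling P H)
    (hE : finrank ℝ E = 2) (hf : f ≠ 0) (p : E) :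
    {i | p ∈ transversalVertices f (P i)}.ncard ≤ 2 := by
  rcases {i | p ∈ transversalVertices f (P i)}.subsingleton_or_nontrivial with hs | hs
  · exact ((ncard_le_one hs.finite).2 hs).trans one_le_two
  · obtain ⟨i, hi, j, hj, hij⟩ := hs
    refine (ncard_le_ncard (t := {i, j}) fun k hk => ?_).trans (ncard_pair hij).le
    exact h.eq_or_eq_of_mem_image_interior hE hf hij hi.1.1 hj.1.1 hk.1.1 hi.2 hj.2 hk.2

lemma eventually_exists_mem [Finite ι] (h : IsConvexTiling P H) (p : E) :
    ∀ᶠ x in 𝓝 p, x ∈ H → ∃ i, p ∈ P i ∧ x ∈ P i := by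
  filter_upwards [(locallyFinite_of_finite P).eventually_subset
    (fun i => (h.isCompact i).isClosed) p] with x hx hxH
  obtain ⟨i, hi⟩ := h.exists_mem hxH
  exact ⟨i, hx hi, hi⟩

lemma exists_mem_extremePoints (h : IsConvexTiling P H) (hp : p ∈ extremePoints ℝ H) :
    ∃ i, p ∈ extremePoints ℝ (P i) := by
  obtain ⟨i, hi⟩ := h.exists_mem hp.1
  exact ⟨i, inter_extremePoints_subset_extremePoints_of_subset (h.subset i) ⟨hi, hp⟩⟩

lemma mem_transversalVertices_of_mem_extremePoints (h : IsConvexTiling P H)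
    (hp : p ∈ extremePoints ℝ H) (hi : p ∈ transversalVertices f (P i)) :
    p ∈ transversalVertices f H :=
  ⟨hp, image_mono (interior_mono (h.subset i)) hi.2⟩

lemma mem_interior_of_mem_image_interior (h : IsConvexTiling P H) (hH : Convex ℝ H)
    (hE : finrank ℝ E = 2) (hf : f ≠ 0) (hij : i ≠ j) (hpi : p ∈ P i) (hpj : p ∈ P j)
    (hfi : f p ∈ f '' interior (P i)) (hfj : f p ∈ f '' interior (P j)) : p ∈ interior H := by
  obtain ⟨⟨x, hx, hfx⟩, y, hy, hfy⟩ := And.intro hfi hfj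
  have hp : p ∈ segment ℝ x y :=
    h.mem_segment_of_ne hE hf hij hpi hpj hx (interior_subset hy) hfx hfy
  exact hH.interior.segment_subset (interior_mono (h.subset i) hx)
    (interior_mono (h.subset j) hy) hp

lemma ncard_setOf_mem_transversalVertices_le_one (h : IsConvexTiling P H) (hH : Convex ℝ H)
    (hE : finrank ℝ E = 2) (hf : f ≠ 0) (hp : p ∈ extremePoints ℝ H) :
    {i | p ∈ transversalVertices f (P i)}.ncard ≤ 1 := by
  have : Nontrivial E := nontrivial_of_finrank_eq_succ hE
  have hs : {i | p ∈ transversalVertices f (P i)}.Subsingleton := fun i hi j hj =>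
    by_contra fun hij => (disjoint_interior_extremePoints H).notMem_of_mem_left
      (h.mem_interior_of_mem_image_interior hH hE hf hij hi.1.1 hj.1.1 hi.2 hj.2) hp
  exact (ncard_le_one hs.finite).2 hs

lemma mem_image_interior_of_notMem_extremePoints (h : IsConvexTiling P H)
    (hE : finrank ℝ E = 2) (hf : f ≠ 0) (hpi : p ∈ P i) (hfi : f p ∈ f '' interior (P i))
    (hpj : p ∈ P j) (hj : p ∉ extremePoints ℝ (P j)) : f p ∈ f '' interior (P j) := by
  rcases mem_image_interior_or_exists_of_notMem_extremePoints (f := f) (h.convex j)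
    (h.interior_nonempty j ⟨p, hpj⟩) hpj hj with hfj | ⟨v, hv, hfv, hadd, hsub⟩
  · exact hfj
  obtain rfl | hij := eq_or_ne i j
  · exact hfi
  obtain ⟨x, hx, hfx⟩ := hfi
  have hxv : p ∈ segment ℝ x (p + v) :=
    h.mem_segment_of_ne hE hf hij hpi hpj hx hadd hfx (by simp [hfv])
  have hray : SameRay ℝ (x - p) (p - v - p) := by
    simpa using sameRay_neg_iff.2 (mem_segment_iff_sameRay.1 hxv)
  exact absurd (h.eq_of_sameRay hpi hpj hx hsub (by simpa using hv) hray) hij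

lemma mem_extremePoints_of_forall_mem_image_interior [Finite ι] (h : IsConvexTiling P H)
    (hH : Convex ℝ H) (hE : finrank ℝ E = 2) (hf : f ≠ 0) (hp : p ∈ extremePoints ℝ (P i))
    (hall : ∀ j, p ∈ P j → f p ∈ f '' interior (P j)) : p ∈ extremePoints ℝ H := by
  by_cases! hother : ∃ j ≠ i, p ∈ P j
  · obtain ⟨j, hji, hpj⟩ := hother
    have hfi := hall i hp.1
    have hint := h.mem_interior_of_mem_image_interior hH hE hf hji.symm hp.1 hpj hfi (hall j hpj)
    have hnhds : P i ∪ P j ∈ 𝓝 p := by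
      filter_upwards [mem_interior_iff_mem_nhds.1 hint, h.eventually_exists_mem p] with x hxH hx
      obtain ⟨k, hpk, hxk⟩ := hx hxH
      rcases h.eq_or_eq_of_mem_image_interior hE hf hji.symm hp.1 hpj hpk hfi (hall j hpj)
        (hall k hpk) with rfl | rfl
      · exact .inl hxk
      · exact .inr hxk
    have hdisj : Disjoint (interior (P i)) (P j) :=
      disjoint_left.2 fun x hxi hxj => hji (h.eq_of_mem_interior hxi hxj).symm
    exact absurd hp (notMem_extremePoints_of_union_mem_nhds (by lia) (h.convex i) (h.convex j)
      (h.isCompact i).isClosed (h.interior_nonempty i ⟨p, hp.1⟩) hdisj hpj hnhds)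
  · refine mem_extremePoints_of_eventually hH (h.subset i) hp ?_
    filter_upwards [h.eventually_exists_mem p] with x hx hxH
    obtain ⟨k, hpk, hxk⟩ := hx hxH
    obtain rfl : k = i := by_contra fun hki => hother k hki hpk
    exact hxk

lemma exists_mem_extremePoints_notMem_transversalVertices [Finite ι] (h : IsConvexTiling P H)
    (hH : Convex ℝ H) (hE : finrank ℝ E = 2) (hf : f ≠ 0) (hp : p ∈ extremePoints ℝ (P i))
    (hpH : p ∉ extremePoints ℝ H) :
    ∃ j, p ∈ extremePoints ℝ (P j) ∧ p ∉ transversalVertices f (P j) := by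
  by_contra! hall
  refine hpH (h.mem_extremePoints_of_forall_mem_image_interior hH hE hf hp fun j hpj => ?_)
  by_cases hj : p ∈ extremePoints ℝ (P j)
  · exact (hall j hj).2
  · exact h.mem_image_interior_of_notMem_extremePoints hE hf hp.1 (hall i hp).2 hpj hj

lemma ncard_setOf_mem_transversalVertices_lt [Finite ι] (h : IsConvexTiling P H)
    (hH : Convex ℝ H) (hE : finrank ℝ E = 2) (hf : f ≠ 0) (hp : p ∈ extremePoints ℝ (P i))
    (hpH : p ∉ extremePoints ℝ H) :
    {j | p ∈ transversalVertices f (P j)}.ncard < {j | p ∈ extremePoints ℝ (P j)}.ncard := by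
  obtain ⟨j, hj, hjT⟩ := h.exists_mem_extremePoints_notMem_transversalVertices hH hE hf hp hpH
  exact ncard_lt_ncard ⟨fun k hk => hk.1, fun hsub => hjT (hsub hj)⟩

lemma three_mul_ncard_add_indicator_le [Finite ι] (h : IsConvexTiling P H) (hH : Convex ℝ H)
    (hE : finrank ℝ E = 2) (hf : f ≠ 0) (p : E) :
    3 * {i | p ∈ transversalVertices f (P i)}.ncard + 2 * (extremePoints ℝ H).indicator 1 p ≤
      2 * {i | p ∈ extremePoints ℝ (P i)}.ncard + 3 * (transversalVertices f H).indicator 1 p := by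
  by_cases hpH : p ∈ extremePoints ℝ H
  · have hk : 0 < {i | p ∈ extremePoints ℝ (P i)}.ncard :=
      (ncard_pos (toFinite _)).2 (h.exists_mem_extremePoints hpH)
    have hc := h.ncard_setOf_mem_transversalVertices_le_one hH hE hf hpH
    by_cases hpT : p ∈ transversalVertices f H
    · simp only [indicator_of_mem hpH, indicator_of_mem hpT, Pi.one_apply]
      lia
    · have hc0 : {i | p ∈ transversalVertices f (P i)} = ∅ := eq_empty_of_forall_notMem
        fun i hi => hpT (h.mem_transversalVertices_of_mem_extremePoints hpH hi)
      simp only [hc0, ncard_empty, indicator_of_mem hpH, Pi.one_apply]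
      lia
  · have hc := h.ncard_setOf_mem_transversalVertices_le_two hE hf p
    rw [indicator_of_notMem hpH]
    rcases {i | p ∈ transversalVertices f (P i)}.eq_empty_or_nonempty with hc0 | ⟨i, hi⟩
    · simp [hc0]
    · have := h.ncard_setOf_mem_transversalVertices_lt hH hE hf hi.1 hpH
      lia

variable [Fintype ι]

lemma three_mul_sum_ncard_transversalVertices_add_le (h : IsConvexTiling P H) (hH : Convex ℝ H)
    (hE : finrank ℝ E = 2) (hf : f ≠ 0) (hfin : ∀ i, (extremePoints ℝ (P i)).Finite) :
    3 * ∑ i, (transversalVertices f (P i)).ncard + 2 * (extremePoints ℝ H).ncard ≤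
      2 * ∑ i, (extremePoints ℝ (P i)).ncard + 3 * (transversalVertices f H).ncard := by
  obtain ⟨V, hV⟩ := (finite_iUnion hfin).exists_finset_coe
  have hPV (i : ι) : extremePoints ℝ (P i) ⊆ V :=
    hV ▸ subset_iUnion (fun i => extremePoints ℝ (P i)) i
  have hHV : extremePoints ℝ H ⊆ V := fun p hp => hV ▸ mem_iUnion.2 (h.exists_mem_extremePoints hp)
  rw [sum_ncard_eq_sum_ncard_setOf_mem fun i => transversalVertices_subset.trans (hPV i),
    sum_ncard_eq_sum_ncard_setOf_mem hPV, ncard_eq_sum_indicator hHV,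
    ncard_eq_sum_indicator (transversalVertices_subset.trans hHV)]
  simp only [Finset.mul_sum, ← Finset.sum_add_distrib]
  exact Finset.sum_le_sum fun p _ => h.three_mul_ncard_add_indicator_le hH hE hf p

lemma sum_ncard_extremePoints_le (h : IsConvexTiling P H) (hf : f ≠ 0)
    (hfin : ∀ i, (extremePoints ℝ (P i)).Finite)
    (hinj : InjOn f (⋃ i, extremePoints ℝ (P i))) :
    ∑ i, (extremePoints ℝ (P i)).ncard ≤
      ∑ i, (transversalVertices f (P i)).ncard + 2 * Fintype.card ι := by
  have hle (i : ι) : (extremePoints ℝ (P i)).ncard ≤ (transversalVertices f (P i)).ncard + 2 := by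
    rcases (P i).eq_empty_or_nonempty with hi | hi
    · simp [hi]
    · exact (ncard_transversalVertices_add_two hf (h.convex i) (h.isCompact i)
        (h.interior_nonempty i hi) (hfin i)
        (hinj.mono (subset_iUnion (fun i => extremePoints ℝ (P i)) i))).ge
  calc ∑ i, (extremePoints ℝ (P i)).ncard
      ≤ ∑ i, ((transversalVertices f (P i)).ncard + 2) := Finset.sum_le_sum fun i _ => hle i
    _ = ∑ i, (transversalVertices f (P i)).ncard + 2 * Fintype.card ι := by
      simp [Finset.sum_add_distrib, mul_comm]

end IsConvexTiling

theorem sum_vertices_le_six_general {ι E : Type*} [Fintype ι] [NormedAddCommGroup E]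
    [NormedSpace ℝ E] (hE : finrank ℝ E = 2) {P : ι → Set E} {H : Set E}
    (hP : IsConvexTiling P H) (hH : Convex ℝ H) (hne : H.Nonempty)
    (hfin : ∀ i, (extremePoints ℝ (P i)).Finite) :
    ∑ i, (extremePoints ℝ (P i)).ncard + 6 ≤
      6 * Fintype.card ι + (extremePoints ℝ H).ncard := by
  have : FiniteDimensional ℝ E := .of_finrank_eq_succ hE
  have : Nontrivial E := nontrivial_of_finrank_eq_succ hE
  obtain ⟨f, hf, hinj⟩ := exists_strongDual_ne_zero_injOn (finite_iUnion hfin)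
  have hsub : extremePoints ℝ H ⊆ ⋃ i, extremePoints ℝ (P i) := fun p hp =>
    mem_iUnion.2 (hP.exists_mem_extremePoints hp)
  have hcompact : IsCompact H := hP.iUnion_eq ▸ isCompact_iUnion hP.isCompact
  have hint : (interior H).Nonempty := by
    obtain ⟨x, hx⟩ := hne
    obtain ⟨i, hi⟩ := hP.exists_mem hx
    exact (hP.interior_nonempty i ⟨x, hi⟩).mono (interior_mono (hP.subset i))
  have hboundary : (transversalVertices f H).ncard + 2 = (extremePoints ℝ H).ncard :=
    ncard_transversalVertices_add_two hf hH hcompact hint ((finite_iUnion hfin).subset hsub)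
      (hinj.mono hsub)
  have htiles := hP.sum_ncard_extremePoints_le hf hfin hinj
  have hpoints := hP.three_mul_sum_ncard_transversalVertices_add_le hH hE hf hfin
  lia

/-- If convex polytopes `P 1, …, P N`, each empty or with nonempty interior, tile a convex
hexagon with pairwise disjoint interiors, then the average number of their vertices is at
most 6. -/
theorem sum_vertices_le_six (Hex : Set Pt) (hHex : IsConvexHexagon Hex)
    (N : ℕ) (P : Fin N → Set Pt)
    (hpoly : ∀ n, ∃ G : Finset Pt, P n = convexHull ℝ (G : Set Pt))
    (hne : ∀ n, P n = ∅ ∨ (interior (P n)).Nonempty)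
    (hunion : (⋃ n, P n) = Hex)
    (hdisj : ∀ n m, n ≠ m → interior (P n) ∩ interior (P m) = ∅) :
    ∑ n : Fin N, (Set.extremePoints ℝ (P n)).ncard ≤ 6 * N := by
  obtain ⟨-, hconvex, hint, hsix⟩ := hHex
  choose G hG using hpoly
  have htiling : IsConvexTiling P Hex :=
    { convex := fun n => hG n ▸ convex_convexHull ℝ _
      isCompact := fun n => hG n ▸ (G n).finite_toSet.isCompact_convexHull ℝ
      interior_nonempty := fun n hn => (hne n).resolve_left hn.ne_empty
      iUnion_eq := hunion
      disjoint_interior := fun n m hnm => disjoint_iff_inter_eq_empty.2 (hdisj n m hnm) }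
  have hfin (n : Fin N) : (extremePoints ℝ (P n)).Finite :=
    (G n).finite_toSet.subset (hG n ▸ extremePoints_convexHull_subset)
  have hcount := sum_vertices_le_six_general finrank_euclideanSpace_fin htiling hconvex
    (hint.mono interior_subset) hfin
  rw [hsix, Fintype.card_fin] at hcount
  exact Nat.le_of_add_le_add_right hcount
end
end

section
/- For every integer n ≥ 3, a*(n) = √3/2 + ((n−2)/2)·sin(2π/(3(n−2))), where a*(n) is the supremum of the areas of convex polygons with at most n vertices inscribed in M. -/
open Metric MeasureTheory Real

noncomputable section

/-- The set `M`: the closed unit disk truncated by two chords of length `√3` sharing the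
endpoint `(0, −1)`. -/
def M : Set Pt :=
  {p | p 0 ^ 2 + p 1 ^ 2 ≤ 1 ∧ Real.sqrt 3 * p 0 - p 1 ≤ 1 ∧ -Real.sqrt 3 * p 0 - p 1 ≤ 1}

/-- `a*(n)`: the supremum of the areas of convex polygons with at most `n` vertices inscribed
in `M`. -/
def astar (n : ℕ) : ℝ :=
  sSup {a : ℝ | ∃ S : Finset Pt, (S : Set Pt) ⊆ M ∧ S.card ≤ n ∧
    a = (volume (convexHull ℝ (S : Set Pt))).toReal}

/-!
For a finite set `K`, the area of `convexHull (insert p K)` is a convex function of `p`: when `p`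
moves along a line, each section of the hull parallel to that line lies in the Minkowski
combination of the corresponding sections at the two endpoints. Hence the vertices of a polygon in
`M` can be pushed one at a time, without decreasing the area, into any set whose convex hull
contains `M`; the vertex `(0, -1)` together with the opposite arc of `120°` is such a set.

If no vertex is pushed to `(0, -1)`, the polygon lies in the rectangle of sides `√3` and `1 / 2`
spanned by the arc. Otherwise, triangulating from `(0, -1)` expresses twice its area as the sum of
the sines of the angular gaps between consecutive vertices. The two gaps at `(0, -1)` are at least
`2π/3` and there are `n - 2` others. Bounding the sine by its tangent lines at `2π/3` and at
`2π/(3(n-2))` gives the upper bound, with equality for equally spaced points on the arc.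
-/

/-! ### Convexity of the volume of a polytope in one vertex -/

section AffineSplit

variable {E : Type*} [AddCommGroup E] [Module ℝ E]

theorem segment_subset_union_segment {x y z : E} (hz : z ∈ segment ℝ x y) :
    segment ℝ x y ⊆ segment ℝ x z ∪ segment ℝ z y := by
  rw [← insert_endpoints_openSegment, Set.insert_subset_iff, Set.insert_subset_iff]
  refine ⟨.inl (left_mem_segment ℝ x z), .inr (right_mem_segment ℝ z y), ?_⟩
  rw [segment_eq_image_lineMap] at hz
  refine (openSegment_subset_union x y (Set.image_subset_range _ _ hz)).trans ?_
  exact Set.insert_subset (.inl (right_mem_segment ℝ x z))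
    (Set.union_subset_union (openSegment_subset_segment ℝ x z) (openSegment_subset_segment ℝ z y))

theorem convexHull_insert_eq_union (f : E →ᵃ[ℝ] ℝ) {s t : Set E} {q : E} (hts : t ⊆ s)
    (hs : ∀ x ∈ s, f x ≤ 0) (hq : 0 ≤ f q)
    (ht : ∀ x ∈ convexHull ℝ (insert q s), f x = 0 → x ∈ convexHull ℝ t) :
    convexHull ℝ (insert q s) = convexHull ℝ s ∪ convexHull ℝ (insert q t) := by
  refine subset_antisymm (fun x hx ↦ ?_) (Set.union_subset
    (convexHull_mono (Set.subset_insert q s)) (convexHull_mono (Set.insert_subset_insert hts)))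
  obtain rfl | hne := s.eq_empty_or_nonempty
  · rw [Set.subset_empty_iff.1 hts]
    exact .inr hx
  have hull_s : convexHull ℝ s ⊆ convexHull ℝ (insert q s) :=
    convexHull_mono (Set.subset_insert q s)
  have q_mem {u : Set E} : q ∈ convexHull ℝ (insert q u) :=
    subset_convexHull ℝ _ (Set.mem_insert q u)
  rw [convexHull_insert hne, mem_convexJoin] at hx
  obtain ⟨q, rfl, y, hy, hx⟩ := hx
  have hfy : f y ≤ 0 :=
    convexHull_min hs ((convex_Iic (0 : ℝ)).affine_preimage f) hy
  obtain ⟨z, hz, hfz⟩ : (0 : ℝ) ∈ f '' segment ℝ y q := by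
    rw [image_segment, segment_eq_Icc (hfy.trans hq)]
    exact ⟨hfy, hq⟩
  have hzt : z ∈ convexHull ℝ t :=
    ht z ((convex_convexHull ℝ _).segment_subset (hull_s hy) q_mem hz) hfz
  rw [segment_symm] at hx
  refine (segment_subset_union_segment hz hx).imp (fun h ↦ ?_) fun h ↦ ?_
  · exact (convex_convexHull ℝ s).segment_subset hy (convexHull_mono hts hzt) h
  · exact (convex_convexHull ℝ _).segment_subset
      (convexHull_mono (Set.subset_insert q t) hzt) q_mem h

theorem exists_mem_convexHull_insert_of_combo {K : Set E} {p q z : E} {a b : ℝ} (hab : a + b = 1)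
    (hz : z ∈ convexHull ℝ (insert (a • p + b • q) K)) :
    ∃ x ∈ convexHull ℝ (insert p K), ∃ y ∈ convexHull ℝ (insert q K), ∃ r : ℝ,
      x - y = r • (p - q) ∧ a • x + b • y = z := by
  suffices convexHull ℝ (insert (a • p + b • q) K) ⊆ {z | ∃ x ∈ convexHull ℝ (insert p K),
      ∃ y ∈ convexHull ℝ (insert q K), ∃ r : ℝ, x - y = r • (p - q) ∧ a • x + b • y = z} from
    this hz
  refine convexHull_min (Set.insert_subset ?_ fun k hk ↦ ?_) ?_
  · exact ⟨p, subset_convexHull ℝ _ (Set.mem_insert p K), q,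
      subset_convexHull ℝ _ (Set.mem_insert q K), 1, (one_smul ℝ _).symm, rfl⟩
  · exact ⟨k, subset_convexHull ℝ _ (Set.mem_insert_of_mem p hk), k,
      subset_convexHull ℝ _ (Set.mem_insert_of_mem q hk), 0, by simp, Convex.combo_self hab k⟩
  · rintro _ ⟨x, hx, y, hy, r, hr, rfl⟩ _ ⟨x', hx', y', hy', r', hr', rfl⟩ c d hc hd hcd
    refine ⟨c • x + d • x', convex_convexHull ℝ _ hx hx' hc hd hcd, c • y + d • y',
      convex_convexHull ℝ _ hy hy' hc hd hcd, c * r + d * r', ?_, by module⟩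
    rw [add_smul, mul_smul, mul_smul, ← hr, ← hr']
    module

end AffineSplit

section Measure

open Pointwise

theorem ediam_le_volume_of_convex {s : Set ℝ} (hs : Convex ℝ s) : ediam s ≤ volume s := by
  refine ediam_le fun x hx y hy ↦ ?_
  calc edist x y = volume (Set.uIcc x y) := by
        rw [Real.volume_interval, edist_dist, dist_comm, Real.dist_eq]
    _ ≤ volume s := measure_mono (hs.ordConnected.uIcc_subset hx hy)

theorem volume_smul_add_smul_le {s t : Set ℝ} (hs : Convex ℝ s) (ht : Convex ℝ t) {a b : ℝ}
    (ha : 0 ≤ a) (hb : 0 ≤ b) :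
    volume (a • s + b • t) ≤ .ofReal a * volume s + .ofReal b * volume t :=
  calc volume (a • s + b • t) ≤ ediam (a • s + b • t) := Real.volume_le_diam _
    _ ≤ ediam (a • s) + ediam (b • t) := ediam_add_le _ _
    _ = .ofReal a * ediam s + .ofReal b * ediam t := by
      simp only [ediam_smul₀, ENNReal.smul_def, smul_eq_mul, Real.enorm_of_nonneg,
        ← enorm_eq_nnnorm, ha, hb]
    _ ≤ .ofReal a * volume s + .ofReal b * volume t := by
      gcongr
      exacts [ediam_le_volume_of_convex hs, ediam_le_volume_of_convex ht]

theorem measure_prod_le_of_section_subset {W : Type*} [MeasurableSpace W] {ν : Measure W}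
    [SFinite ν] {A B C : Set (W × ℝ)} (hA : MeasurableSet A) (hB : MeasurableSet B)
    (hC : MeasurableSet C) (hcA : ∀ w, Convex ℝ (Prod.mk w ⁻¹' A))
    (hcB : ∀ w, Convex ℝ (Prod.mk w ⁻¹' B)) {a b : ℝ} (ha : 0 ≤ a) (hb : 0 ≤ b)
    (h : ∀ w, Prod.mk w ⁻¹' C ⊆ a • (Prod.mk w ⁻¹' A) + b • (Prod.mk w ⁻¹' B)) :
    ν.prod volume C ≤ .ofReal a * ν.prod volume A + .ofReal b * ν.prod volume B := by
  rw [Measure.prod_apply hA, Measure.prod_apply hB, Measure.prod_apply hC,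
    ← lintegral_const_mul _ (measurable_measure_prodMk_left hA),
    ← lintegral_const_mul _ (measurable_measure_prodMk_left hB),
    ← lintegral_add_left ((measurable_measure_prodMk_left hA).const_mul _)]
  exact lintegral_mono fun w ↦
    (measure_mono (h w)).trans (volume_smul_add_smul_le (hcA w) (hcB w) ha hb)

variable {E : Type*} [NormedAddCommGroup E] [NormedSpace ℝ E] [FiniteDimensional ℝ E]
  [MeasurableSpace E] [BorelSpace E] (μ : Measure E) [μ.IsAddHaarMeasure]

theorem aedisjoint_convexHull_of_affine_nonpos_of_nonneg {f : E →ᵃ[ℝ] ℝ} (hf : ∃ x, f x ≠ 0)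
    {s t : Set E} (hs : ∀ x ∈ s, f x ≤ 0) (ht : ∀ x ∈ t, 0 ≤ f x) :
    AEDisjoint μ (convexHull ℝ s) (convexHull ℝ t) := by
  let H : AffineSubspace ℝ E := (AffineSubspace.mk' (0 : ℝ) ⊥).comap f
  have mem_H {x : E} : x ∈ H ↔ f x = 0 := by simp [H, AffineSubspace.mem_mk']
  have hull_s : convexHull ℝ s ⊆ f ⁻¹' Set.Iic 0 :=
    convexHull_min hs ((convex_Iic 0).affine_preimage f)
  have hull_t : convexHull ℝ t ⊆ f ⁻¹' Set.Ici 0 :=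
    convexHull_min ht ((convex_Ici 0).affine_preimage f)
  refine measure_mono_null (fun x hx ↦ mem_H.2 ((hull_s hx.1).antisymm (hull_t hx.2)))
    (Measure.addHaar_affineSubspace μ H ?_)
  obtain ⟨x, hx⟩ := hf
  intro hH
  exact hx (mem_H.1 (hH ▸ AffineSubspace.mem_top ℝ E x))

theorem exists_continuousLinearEquiv_prod_map_eq_smul {v : E} (hv : v ≠ 0) :
    ∃ L : E ≃L[ℝ] (Fin (Module.finrank ℝ E - 1) → ℝ) × ℝ, L v = (0, 1) ∧
      ∃ c : NNReal, μ.map L = c • Measure.prod volume volume := by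
  have : Nontrivial E := nontrivial_of_ne v 0 hv
  have hdim : Module.finrank ℝ ((Fin (Module.finrank ℝ E - 1) → ℝ) × ℝ) = Module.finrank ℝ E := by
    simpa using Nat.sub_add_cancel Module.finrank_pos
  let L₀ := (ContinuousLinearEquiv.ofFinrankEq hdim).symm
  obtain ⟨L₁, hL₁⟩ := SeparatingDual.exists_continuousLinearEquiv_apply_eq (R := ℝ) (x := L₀ v)
    (y := ((0, 1) : (Fin (Module.finrank ℝ E - 1) → ℝ) × ℝ)) (by simpa using hv) (by simp)
  have := (L₀.trans L₁).isAddHaarMeasure_map μ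
  exact ⟨L₀.trans L₁, hL₁, _, Measure.isAddLeftInvariant_eq_smul _ _⟩

theorem measure_convexHull_insert_combo_le {K : Set E} (hK : K.Finite) (p q : E) {a b : ℝ}
    (ha : 0 ≤ a) (hb : 0 ≤ b) (hab : a + b = 1) :
    μ (convexHull ℝ (insert (a • p + b • q) K)) ≤
      .ofReal a * μ (convexHull ℝ (insert p K)) + .ofReal b * μ (convexHull ℝ (insert q K)) := by
  obtain rfl | hpq := eq_or_ne p q
  · rw [Convex.combo_self hab, ← add_mul, ← ENNReal.ofReal_add ha hb, hab, ENNReal.ofReal_one,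
      one_mul]
  -- In coordinates where `p - q` is the last basis vector, each fibre of the combined hull lies in
  -- the Minkowski combination of the corresponding fibres of the two hulls.
  obtain ⟨L, hL, c, hc⟩ := exists_continuousLinearEquiv_prod_map_eq_smul μ (sub_ne_zero.2 hpq)
  let C (x : E) := L.symm ⁻¹' convexHull ℝ (insert x K)
  have measurable_C (x : E) : MeasurableSet (C x) :=
    ((hK.insert x).isClosed_convexHull ℝ).measurableSet.preimage L.symm.continuous.measurable
  have convex_C_section (x : E) (w) : Convex ℝ (Prod.mk w ⁻¹' C x) := by
    refine (((convex_convexHull ℝ (insert x K)).linear_preimage L.symm.toLinearMap).affine_preimage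
      ((AffineMap.const ℝ ℝ w).prod (AffineMap.id ℝ ℝ)) :)
  have measure_C (x : E) :
      μ (convexHull ℝ (insert x K)) = c * Measure.prod volume volume (C x) := by
    rw [← smul_eq_mul, ← ENNReal.smul_def, ← Measure.smul_apply, ← hc,
      Measure.map_apply L.continuous.measurable (measurable_C x), ← Set.preimage_comp]
    simp
  simp only [measure_C, mul_left_comm _ (c : ENNReal), ← mul_add]
  gcongr
  refine measure_prod_le_of_section_subset (measurable_C p) (measurable_C q) (measurable_C _)
    (convex_C_section p) (convex_C_section q) ha hb fun w τ hτ ↦ ?_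
  obtain ⟨x, hx, y, hy, r, hr, hxy⟩ := exists_mem_convexHull_insert_of_combo hab hτ
  have hLr : L x - L y = (0, r) := by rw [← map_sub, hr, map_smul, hL]; simp
  have hLz : a • L x + b • L y = (w, τ) := by simpa using congrArg L hxy
  have hfst : (L x).1 = (L y).1 := sub_eq_zero.1 (congrArg Prod.fst hLr)
  have hw : (L x).1 = w := by
    rw [← Convex.combo_self hab (L x).1]
    nth_rewrite 2 [hfst]
    exact congrArg Prod.fst hLz
  refine ⟨a • (L x).2, Set.smul_mem_smul_set ?_, b • (L y).2, Set.smul_mem_smul_set ?_,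
    congrArg Prod.snd hLz⟩
  · simpa [C, ← hw] using hx
  · simpa [C, ← hw, hfst] using hy

theorem convexOn_measureReal_convexHull_insert {K : Set E} (hK : K.Finite) :
    ConvexOn ℝ Set.univ fun p ↦ μ.real (convexHull ℝ (insert p K)) := by
  refine ⟨convex_univ, fun p _ q _ a b ha hb hab ↦ ?_⟩
  have hfin (x : E) : μ (convexHull ℝ (insert x K)) ≠ ⊤ :=
    ((hK.insert x).isCompact_convexHull ℝ).measure_ne_top
  have := ENNReal.toReal_mono (by finiteness [hfin p, hfin q])
    (measure_convexHull_insert_combo_le μ hK p q ha hb hab)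
  rw [ENNReal.toReal_add (by finiteness [hfin p]) (by finiteness [hfin q])] at this
  simpa [measureReal_def, ha, hb] using this

theorem exists_finset_subset_measureReal_convexHull_le {X : Set E} {S : Finset E}
    (hS : ↑S ⊆ convexHull ℝ X) : ∃ T : Finset E, ↑T ⊆ X ∧ T.card ≤ S.card ∧
      μ.real (convexHull ℝ S) ≤ μ.real (convexHull ℝ T) := by
  classical
  suffices ∀ U : Finset E, ∃ T : Finset E, ↑T ⊆ X ∧ T.card ≤ S.card ∧
      μ.real (convexHull ℝ ↑(S ∪ U)) ≤ μ.real (convexHull ℝ ↑(T ∪ U)) by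
    simpa using this ∅
  induction S using Finset.induction_on with
  | empty => exact fun U ↦ ⟨∅, by simp⟩
  | insert p S hp ih =>
    intro U
    rw [Finset.coe_insert, Set.insert_subset_iff] at hS
    obtain ⟨x, hxX, hx⟩ := (convexOn_measureReal_convexHull_insert μ
      (S ∪ U).finite_toSet).exists_ge_of_mem_convexHull (Set.subset_univ X) hS.1
    obtain ⟨T, hTX, hcard, hT⟩ := ih hS.2 (insert x U)
    refine ⟨insert x T, by simp [Set.insert_subset_iff, hxX, hTX], ?_, ?_⟩
    · rw [Finset.card_insert_of_notMem hp]
      exact (Finset.card_insert_le x T).trans (Nat.succ_le_succ hcard)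
    · rw [Finset.union_insert, Finset.union_insert, Finset.coe_insert, Finset.coe_insert] at hT
      rw [Finset.insert_union, Finset.insert_union, Finset.coe_insert, Finset.coe_insert]
      exact hx.trans hT

end Measure

/-! ### Triangles and fans -/

section Triangle

open Pointwise

/-- Twice the signed area of the triangle `a b c`, as an affine function of the vertex `c`. -/
def doubleArea (a b : Pt) : Pt →ᵃ[ℝ] ℝ where
  toFun c := (b 0 - a 0) * (c 1 - a 1) - (b 1 - a 1) * (c 0 - a 0)
  linear := (b 0 - a 0) • EuclideanSpace.projₗ 1 - (b 1 - a 1) • EuclideanSpace.projₗ 0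
  map_vadd' c v := by simp; ring

theorem doubleArea_apply (a b c : Pt) :
    doubleArea a b c = (b 0 - a 0) * (c 1 - a 1) - (b 1 - a 1) * (c 0 - a 0) := rfl

theorem doubleArea_rotate (a b c : Pt) : doubleArea b c a = doubleArea a b c := by
  simp only [doubleArea_apply]; ring

theorem doubleArea_swap (a b c : Pt) : doubleArea a c b = -doubleArea a b c := by
  simp only [doubleArea_apply]; ring

theorem doubleArea_self_left (a b : Pt) : doubleArea a b a = 0 := by
  simp [doubleArea_apply]

theorem doubleArea_self_right (a b : Pt) : doubleArea a b b = 0 := by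
  rw [doubleArea_apply]; ring

theorem volume_parallelepiped_sub (a b c : Pt) :
    volume (parallelepiped ![b - a, c - a]) = .ofReal |doubleArea a b c| := by
  rw [← (EuclideanSpace.basisFun (Fin 2) ℝ).addHaar_eq_volume, Measure.addHaar_parallelepiped,
    Module.Basis.det_apply, Matrix.det_fin_two, doubleArea_apply]
  simp [Module.Basis.toMatrix_apply, mul_comm]

theorem combo_mem_convexHull_triple {E : Type*} [AddCommGroup E] [Module ℝ E] (x y z : E)
    {α β γ : ℝ} (hα : 0 ≤ α) (hβ : 0 ≤ β) (hγ : 0 ≤ γ) (h : α + β + γ = 1) :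
    α • x + β • y + γ • z ∈ convexHull ℝ {x, y, z} := by
  have := (convex_convexHull ℝ {x, y, z}).sum_mem (t := Finset.univ) (w := ![α, β, γ])
    (z := ![x, y, z]) (by simp [Fin.forall_fin_succ, *]) (by simpa [Fin.sum_univ_three])
    fun i _ ↦ subset_convexHull ℝ _ (by fin_cases i <;> simp)
  simpa [Fin.sum_univ_three] using this

theorem vadd_parallelepiped_eq_union {E : Type*} [AddCommGroup E] [Module ℝ E] (a b c : E) :
    a +ᵥ parallelepiped ![b - a, c - a] =
      convexHull ℝ {a, b, c} ∪ convexHull ℝ {b + c - a, c, b} := by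
  refine subset_antisymm ?_ ?_
  · rintro _ ⟨_, ⟨t, ht, rfl⟩, rfl⟩
    simp only [Fin.sum_univ_two, vadd_eq_add, Matrix.cons_val_zero, Matrix.cons_val_one]
    obtain h | h := le_total (t 0 + t 1) 1
    · left
      convert combo_mem_convexHull_triple a b c (sub_nonneg.2 h) (ht.1 0) (ht.1 1) (by ring)
        using 1
      module
    · right
      convert combo_mem_convexHull_triple (b + c - a) c b (sub_nonneg.2 h)
        (sub_nonneg.2 (ht.2 0)) (sub_nonneg.2 (ht.2 1)) (by simp) using 1
      simp only [Pi.one_apply]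
      module
  · have vertices : a +ᵥ parallelepiped ![b - a, c - a] = convexHull ℝ {a, b, c, b + c - a} := by
      rw [parallelepiped_eq_convexHull, ← convexHull_vadd, Fin.sum_univ_two]
      congr 1
      ext x
      simp [Set.mem_vadd_set, Set.mem_add]
      grind
    rw [vertices]
    exact Set.union_subset (convexHull_mono (by grind)) (convexHull_mono (by grind))

theorem aedisjoint_reflected_triangle {a b c : Pt} (h : doubleArea a b c ≠ 0) :
    AEDisjoint volume (convexHull ℝ {b + c - a, c, b}) (convexHull ℝ {a, b, c}) := by
  let f : Pt →ᵃ[ℝ] ℝ := doubleArea a b c • doubleArea b c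
  have hfa : f a = doubleArea a b c * doubleArea a b c := by
    simp [f, doubleArea_rotate]
  have hfb : f b = 0 := by simp [f, doubleArea_self_left]
  have hfc : f c = 0 := by simp [f, doubleArea_self_right]
  have hfd : f (b + c - a) = -f a := by simp [f, doubleArea_apply]; ring
  exact aedisjoint_convexHull_of_affine_nonpos_of_nonneg volume (f := f) ⟨a, by simpa [hfa]⟩
    (by simp [hfa, hfb, hfc, hfd, mul_self_nonneg]) (by simp [hfa, hfb, hfc, mul_self_nonneg])

theorem volume_real_triangle (a b c : Pt) :
    volume.real (convexHull ℝ {a, b, c}) = |doubleArea a b c| / 2 := by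
  -- The diagonal `b c` cuts the parallelogram into the triangle and its point reflection.
  have hcover : volume (convexHull ℝ {b + c - a, c, b} ∪ convexHull ℝ {a, b, c}) =
      .ofReal |doubleArea a b c| := by
    rw [Set.union_comm, ← vadd_parallelepiped_eq_union, measure_vadd, volume_parallelepiped_sub]
  obtain h | h := eq_or_ne (doubleArea a b c) 0
  · rw [h, abs_zero, ENNReal.ofReal_zero] at hcover
    rw [h, abs_zero, zero_div, measureReal_def, measure_mono_null Set.subset_union_right hcover,
      ENNReal.toReal_zero]
  have hreflect : volume (convexHull ℝ {b + c - a, c, b}) = volume (convexHull ℝ {a, b, c}) := by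
    rw [← Measure.measure_neg, ← measure_vadd _ (b + c), ← convexHull_neg, ← convexHull_vadd]
    congr 2
    simp [← Set.image_vadd, Set.image_insert_eq]
  have hmeas : MeasurableSet (convexHull ℝ {a, b, c}) :=
    ((Set.toFinite {a, b, c}).isClosed_convexHull ℝ).measurableSet
  rw [measure_union₀ hmeas.nullMeasurableSet (aedisjoint_reflected_triangle h), hreflect,
    ← two_mul] at hcover
  have := congrArg ENNReal.toReal hcover
  rw [ENNReal.toReal_mul, ENNReal.toReal_ofReal (abs_nonneg _)] at this
  rw [measureReal_def, ← this, ENNReal.toReal_ofNat, mul_div_cancel_left₀ _ two_ne_zero]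

end Triangle

theorem sq_add_sq_pos_of_ne {a b : Pt} (h : a ≠ b) : 0 < (b 0 - a 0) ^ 2 + (b 1 - a 1) ^ 2 := by
  simpa [EuclideanSpace.norm_sq_eq] using pow_pos (norm_pos_iff.2 (sub_ne_zero.2 h.symm)) 2

theorem exists_doubleArea_ne_zero {a b : Pt} (h : a ≠ b) : ∃ c, doubleArea a b c ≠ 0 := by
  refine ⟨!₂[a 0 - (b 1 - a 1), a 1 + (b 0 - a 0)], ?_⟩
  have hperp : doubleArea a b !₂[a 0 - (b 1 - a 1), a 1 + (b 0 - a 0)] =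
      (b 0 - a 0) ^ 2 + (b 1 - a 1) ^ 2 := by
    simp [doubleArea_apply]
    ring
  rw [hperp]
  exact (sq_add_sq_pos_of_ne h).ne'

theorem collinear_of_doubleArea_eq_zero {a b c : Pt} (h : doubleArea a b c = 0) :
    Collinear ℝ {a, c, b} := by
  obtain rfl | hab := eq_or_ne a b
  · simpa [Set.pair_comm] using collinear_pair ℝ a c
  rw [doubleArea_apply] at h
  have hpos := (sq_add_sq_pos_of_ne hab).ne'
  have hc : AffineMap.lineMap a b (((c 0 - a 0) * (b 0 - a 0) + (c 1 - a 1) * (b 1 - a 1)) /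
      ((b 0 - a 0) ^ 2 + (b 1 - a 1) ^ 2)) = c := by
    ext i
    fin_cases i <;> simp [AffineMap.lineMap_apply] <;> field_simp
    · linear_combination (b 1 - a 1) * h
    · linear_combination -(b 0 - a 0) * h
  rw [Set.insert_comm, ← hc]
  exact collinear_insert_of_mem_affineSpan_pair (AffineMap.lineMap_mem_affineSpan_pair _ a b)

theorem mem_segment_of_doubleArea_eq_zero {c a b z : Pt} {r : ℝ} (ha : a ∈ sphere c r)
    (hb : b ∈ sphere c r) (hab : a ≠ b) (hz : z ∈ closedBall c r) (h : doubleArea a b z = 0) :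
    z ∈ segment ℝ a b :=
  mem_segment_iff_wbtw.2
    ((collinear_of_doubleArea_eq_zero h).wbtw_of_dist_eq_of_dist_le ha hz hb hab)

theorem volume_real_convexHull_insert_eq_add {c a b q : Pt} {r : ℝ} {K : Set Pt} (hK : K.Finite)
    (hKc : K ⊆ closedBall c r) (hqc : q ∈ closedBall c r) (haK : a ∈ K) (hbK : b ∈ K)
    (ha : a ∈ sphere c r) (hb : b ∈ sphere c r) (hab : a ≠ b)
    (hneg : ∀ x ∈ K, doubleArea a b x ≤ 0) (hq : 0 ≤ doubleArea a b q) :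
    volume.real (convexHull ℝ (insert q K)) =
      volume.real (convexHull ℝ K) + doubleArea a b q / 2 := by
  have hcover : convexHull ℝ (insert q K) = convexHull ℝ K ∪ convexHull ℝ {q, a, b} := by
    refine convexHull_insert_eq_union (doubleArea a b)
      (Set.insert_subset haK (Set.singleton_subset_iff.2 hbK)) hneg hq fun x hx hx0 ↦ ?_
    rw [convexHull_pair]
    exact mem_segment_of_doubleArea_eq_zero ha hb hab
      (convexHull_min (Set.insert_subset hqc hKc) (convex_closedBall c r) hx) hx0
  have hdisj : AEDisjoint volume (convexHull ℝ K) (convexHull ℝ {q, a, b}) := by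
    refine aedisjoint_convexHull_of_affine_nonpos_of_nonneg volume (exists_doubleArea_ne_zero hab)
      hneg ?_
    simp [hq, doubleArea_self_left, doubleArea_self_right]
  have htriangle := Set.toFinite {q, a, b}
  rw [hcover, measureReal_union₀ (htriangle.isClosed_convexHull ℝ).nullMeasurableSet hdisj
      (hK.isCompact_convexHull ℝ).measure_ne_top (htriangle.isCompact_convexHull ℝ).measure_ne_top,
    volume_real_triangle, ← doubleArea_rotate q a b, abs_of_nonneg hq]

theorem volume_real_convexHull_fan {c a : Pt} {r : ℝ} (ha : a ∈ sphere c r) {p : ℕ → Pt} {n : ℕ}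
    (hp : ∀ i ≤ n, p i ∈ sphere c r) (hpa : ∀ i ≤ n, p i ≠ a)
    (horder : ∀ i j, i ≤ j → j ≤ n → 0 ≤ doubleArea a (p i) (p j)) :
    volume.real (convexHull ℝ (insert a (p '' Set.Iic n))) =
      (∑ i ∈ Finset.range n, doubleArea a (p i) (p (i + 1))) / 2 := by
  induction n with
  | zero =>
    have hIic : Set.Iic 0 = {0} := Set.Iic_bot
    simpa [hIic, doubleArea_self_right] using volume_real_triangle a (p 0) (p 0)
  | succ n ih =>
    have hfan := ih (fun i hi ↦ hp i (hi.trans n.le_succ)) (fun i hi ↦ hpa i (hi.trans n.le_succ))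
      fun i j hij hj ↦ horder i j hij (hj.trans n.le_succ)
    have hlast : insert a (p '' Set.Iic (n + 1)) =
        insert (p (n + 1)) (insert a (p '' Set.Iic n)) := by
      rw [← Order.succ_eq_add_one, Order.Iic_succ, Set.image_insert_eq, Set.insert_comm]
    have hball : insert a (p '' Set.Iic n) ⊆ sphere c r :=
      Set.insert_subset ha (Set.image_subset_iff.2 fun i hi ↦ hp i (le_trans hi n.le_succ))
    rw [hlast, volume_real_convexHull_insert_eq_add
      (((Set.finite_Iic n).image p).insert a)
      (hball.trans sphere_subset_closedBall) (sphere_subset_closedBall (hp (n + 1) le_rfl))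
      (Set.mem_insert a _) (Set.mem_insert_of_mem a ⟨n, Set.self_mem_Iic, rfl⟩) ha (hp n n.le_succ)
      (hpa n n.le_succ).symm ?_ (horder n (n + 1) n.le_succ le_rfl), hfan, Finset.sum_range_succ,
      add_div]
    rintro x (rfl | ⟨i, hi, rfl⟩)
    · exact (doubleArea_self_left x (p n)).le
    · rw [doubleArea_swap]
      exact neg_nonpos.2 (horder i n hi n.le_succ)

/-! ### Polygons inscribed in the unit circle -/

/-- The point of the unit circle with polar angle `θ`. -/
def circlePt (θ : ℝ) : Pt := !₂[cos θ, sin θ]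

@[simp] theorem circlePt_zero (θ : ℝ) : circlePt θ 0 = cos θ := rfl

@[simp] theorem circlePt_one (θ : ℝ) : circlePt θ 1 = sin θ := rfl

theorem circlePt_mem_sphere (θ : ℝ) : circlePt θ ∈ sphere (0 : Pt) 1 := by
  rw [mem_sphere_zero_iff_norm, EuclideanSpace.norm_eq, Real.sqrt_eq_one]
  simp

theorem circlePt_ne_circlePt {α θ : ℝ} (h : α < θ) (h' : θ < α + 2 * π) :
    circlePt θ ≠ circlePt α := fun heq ↦ by
  have hcos : cos (θ - α) = 1 := by
    rw [cos_sub, ← circlePt_zero, ← circlePt_one, heq, circlePt_zero, circlePt_one, ← sq, ← sq,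
      cos_sq_add_sin_sq]
  have := (cos_eq_one_iff_of_lt_of_lt (by linarith [pi_pos]) (by linarith)).1 hcos
  linarith

theorem doubleArea_circlePt (α β γ : ℝ) :
    doubleArea (circlePt α) (circlePt β) (circlePt γ) =
      sin (β - α) + sin (γ - β) + sin (α - γ) := by
  simp only [doubleArea_apply, circlePt_zero, circlePt_one, sin_sub]
  ring

theorem sin_add_sin_sub_sin_add (x y : ℝ) :
    sin x + sin y - sin (x + y) = 4 * sin (x / 2) * sin (y / 2) * sin ((x + y) / 2) := by
  obtain ⟨u, rfl⟩ : ∃ u, x = 2 * u := ⟨x / 2, by ring⟩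
  obtain ⟨v, rfl⟩ : ∃ v, y = 2 * v := ⟨y / 2, by ring⟩
  rw [← mul_add]
  simp only [mul_div_cancel_left₀ _ (two_ne_zero' ℝ), sin_two_mul, sin_add, cos_add]
  linear_combination -2 * sin u * cos u * sin_sq_add_cos_sq v -
    2 * sin v * cos v * sin_sq_add_cos_sq u

theorem doubleArea_circlePt_nonneg {α β γ : ℝ} (hαβ : α ≤ β) (hβγ : β ≤ γ)
    (hγα : γ ≤ α + 2 * π) : 0 ≤ doubleArea (circlePt α) (circlePt β) (circlePt γ) := by
  have hprod := sin_add_sin_sub_sin_add (β - α) (γ - β)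
  rw [sub_add_sub_cancel', sub_eq_add_neg, ← sin_neg, neg_sub] at hprod
  rw [doubleArea_circlePt, hprod]
  have sin_half_nonneg {x : ℝ} (hx : 0 ≤ x) (hx' : x ≤ 2 * π) : 0 ≤ sin (x / 2) :=
    sin_nonneg_of_nonneg_of_le_pi (by linarith) (by linarith)
  have h₁ := sin_half_nonneg (sub_nonneg.2 hαβ) (by linarith)
  have h₂ := sin_half_nonneg (sub_nonneg.2 hβγ) (by linarith)
  have h₃ := sin_half_nonneg (sub_nonneg.2 (hαβ.trans hβγ)) (by linarith)
  positivity

theorem volume_real_convexHull_circlePt {α : ℝ} {θ : ℕ → ℝ} {n : ℕ}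
    (hmono : MonotoneOn θ (Set.Iic n)) (hfirst : α < θ 0) (hlast : θ n < α + 2 * π) :
    volume.real (convexHull ℝ (insert (circlePt α) (circlePt '' (θ '' Set.Iic n)))) =
      (sin (θ 0 - α) + ∑ i ∈ Finset.range n, sin (θ (i + 1) - θ i) + sin (α - θ n)) / 2 := by
  have hlt {i : ℕ} (hi : i ≤ n) : α < θ i :=
    hfirst.trans_le (hmono (Nat.zero_le n) hi (Nat.zero_le i))
  have hgt {i : ℕ} (hi : i ≤ n) : θ i < α + 2 * π :=
    (hmono hi Set.self_mem_Iic hi).trans_lt hlast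
  rw [Set.image_image, volume_real_convexHull_fan (circlePt_mem_sphere α)
    (fun i _ ↦ circlePt_mem_sphere (θ i)) (fun i hi ↦ circlePt_ne_circlePt (hlt hi) (hgt hi))
    fun i j hij hj ↦ doubleArea_circlePt_nonneg (hlt (hij.trans hj)).le
      (hmono (hij.trans hj) hj hij) (hgt hj).le]
  have telescope := Finset.sum_range_sub' (fun i ↦ sin (θ i - α)) n
  have doubleArea_eq (i : ℕ) : doubleArea (circlePt α) (circlePt (θ i)) (circlePt (θ (i + 1))) =
      sin (θ i - α) - sin (θ (i + 1) - α) + sin (θ (i + 1) - θ i) := by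
    rw [doubleArea_circlePt, ← neg_sub (θ (i + 1)) α, sin_neg]
    ring
  simp only [doubleArea_eq, Finset.sum_add_distrib, telescope]
  rw [← neg_sub (θ n) α, sin_neg]
  ring

theorem sin_le_tangent {t τ : ℝ} (ht : t ∈ Set.Icc 0 π) (hτ : τ ∈ Set.Icc 0 π) :
    sin t ≤ sin τ + cos τ * (t - τ) := by
  have hconcave := strictConcaveOn_sin_Icc.concaveOn
  obtain h | rfl | h := lt_trichotomy t τ
  · have := hconcave.le_slope_of_hasDerivAt ht hτ h (hasDerivAt_sin τ)
    rw [slope_def_field, le_div_iff₀ (sub_pos.2 h)] at this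
    linarith
  · simp
  · have := hconcave.slope_le_of_hasDerivAt hτ ht h (hasDerivAt_sin τ)
    rw [slope_def_field, div_le_iff₀ (sub_pos.2 h)] at this
    linarith

theorem sum_sin_le {ι : Type*} {s : Finset ι} {t : ι → ℝ} (ht : ∀ i ∈ s, t i ∈ Set.Icc 0 π)
    {τ : ℝ} (hτ : τ ∈ Set.Icc 0 π) :
    ∑ i ∈ s, sin (t i) ≤ s.card * sin τ + cos τ * (∑ i ∈ s, t i - s.card * τ) := by
  refine (Finset.sum_le_sum fun i hi ↦ sin_le_tangent (ht i hi) hτ).trans_eq ?_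
  simp [Finset.sum_add_distrib, ← Finset.mul_sum]

theorem cos_le_neg_half {x : ℝ} (hx : x ∈ Set.Icc (2 * π / 3) (4 * π / 3)) : cos x ≤ -(1 / 2) := by
  have := cos_le_cos_of_nonneg_of_le_pi (abs_nonneg (x - π)) (y := π / 3) (by linarith [pi_pos])
    (abs_le.2 ⟨by linarith [hx.1], by linarith [hx.2]⟩)
  rw [cos_abs, cos_sub_pi, cos_pi_div_three] at this
  linarith

theorem sin_two_pi_div_three : sin (2 * π / 3) = √3 / 2 := by
  rw [← sin_pi_div_three, ← sin_pi_sub]; ring_nf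

theorem sin_le_tangent_two_pi_div_three {x : ℝ} (hx : x ∈ Set.Icc (2 * π / 3) (4 * π / 3)) :
    sin x ≤ √3 / 2 - (x - 2 * π / 3) / 2 := by
  -- The tangent bound persists beyond `π`, where `sin` stops being concave, because `cos ≤ -1/2`
  -- on the whole interval.
  have anti : AntitoneOn (fun x ↦ sin x + x / 2) (Set.Icc (2 * π / 3) (4 * π / 3)) := by
    refine antitoneOn_of_hasDerivWithinAt_nonpos (convex_Icc _ _) (by fun_prop)
      (fun x _ ↦ ((hasDerivAt_sin x).add ((hasDerivAt_id x).div_const 2)).hasDerivWithinAt)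
      fun x hx ↦ ?_
    linarith [cos_le_neg_half (interior_subset hx)]
  have := anti (Set.left_mem_Icc.2 (hx.1.trans hx.2)) hx hx.1
  simp only [sin_two_pi_div_three] at this
  linarith

theorem sin_add_sum_sin_add_sin_le {ι : Type*} {s : Finset ι} (hs : s.Nonempty) {t : ι → ℝ}
    (ht : ∀ i ∈ s, 0 ≤ t i) {x y : ℝ} (hx : 2 * π / 3 ≤ x) (hy : 2 * π / 3 ≤ y)
    (hsum : x + ∑ i ∈ s, t i + y = 2 * π) :
    sin x + ∑ i ∈ s, sin (t i) + sin y ≤ √3 + s.card * sin (2 * π / (3 * s.card)) := by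
  have hcard : (1 : ℝ) ≤ s.card := mod_cast hs.card_pos
  set τ := 2 * π / (3 * s.card) with hτ
  have htotal : s.card * τ = 2 * π / 3 := by rw [hτ]; field_simp
  have hτ_mem : τ ∈ Set.Icc 0 (2 * π / 3) :=
    ⟨by positivity, div_le_div_of_nonneg_left (by positivity) three_pos (by linarith)⟩
  have hsum_nonneg := Finset.sum_nonneg ht
  have ht_mem : ∀ i ∈ s, t i ∈ Set.Icc 0 π := fun i hi ↦
    ⟨ht i hi, by linarith [Finset.single_le_sum ht hi, pi_pos]⟩
  have hcos : -(1 / 2) ≤ cos τ := by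
    have : cos (2 * π / 3) = -(1 / 2) := by
      rw [← cos_pi_div_three, ← cos_pi_sub]; ring_nf
    rw [← this]
    exact cos_le_cos_of_nonneg_of_le_pi hτ_mem.1 (by linarith [pi_pos]) hτ_mem.2
  have hsin_sum := sum_sin_le ht_mem ⟨hτ_mem.1, hτ_mem.2.trans (by linarith [pi_pos])⟩
  have hsin_x := sin_le_tangent_two_pi_div_three (x := x) ⟨hx, by linarith⟩
  have hsin_y := sin_le_tangent_two_pi_div_three (x := y) ⟨hy, by linarith⟩
  rw [htotal] at hsin_sum
  nlinarith

theorem exists_monotone_image_Iic_eq {α : Type*} [LinearOrder α] {s : Finset α} (hs : s.Nonempty)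
    {n : ℕ} (hcard : s.card ≤ n + 1) : ∃ u : ℕ → α, Monotone u ∧ u '' Set.Iic n = s := by
  have hlt (i : ℕ) : min i (s.card - 1) < s.card :=
    (min_le_right _ _).trans_lt (Nat.sub_lt hs.card_pos one_pos)
  refine ⟨fun i ↦ s.orderEmbOfFin rfl ⟨min i (s.card - 1), hlt i⟩, fun i j hij ↦
    (s.orderEmbOfFin rfl).monotone (min_le_min_right _ hij), ?_⟩
  rw [← s.range_orderEmbOfFin rfl]
  refine subset_antisymm (Set.image_subset_iff.2 fun i _ ↦ Set.mem_range_self _) ?_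
  rintro _ ⟨i, rfl⟩
  exact ⟨i, by grind, by grind⟩

theorem sin_two_pi_div_nonneg (n : ℕ) : 0 ≤ sin (2 * π / (3 * n)) := by
  obtain rfl | hn := n.eq_zero_or_pos
  · simp
  refine sin_nonneg_of_nonneg_of_le_pi (by positivity)
    (div_le_of_le_mul₀ (by positivity) pi_nonneg ?_)
  have : (1 : ℝ) ≤ n := mod_cast hn
  nlinarith [pi_pos]

theorem volume_real_convexHull_circlePt_le {α : ℝ} {s : Finset ℝ}
    (hs : ∀ θ ∈ s, θ ∈ Set.Icc (α + 2 * π / 3) (α + 4 * π / 3)) {n : ℕ} (hn : n ≠ 0)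
    (hcard : s.card ≤ n + 1) :
    volume.real (convexHull ℝ (insert (circlePt α) (circlePt '' s))) ≤
      (√3 + n * sin (2 * π / (3 * n))) / 2 := by
  obtain rfl | hne := s.eq_empty_or_nonempty
  · have := sin_two_pi_div_nonneg n
    simpa [measureReal_def] using (by positivity : 0 ≤ (√3 + n * sin (2 * π / (3 * n))) / 2)
  obtain ⟨θ, hmono, hθ⟩ := exists_monotone_image_Iic_eq hne hcard
  have hmem {i : ℕ} (hi : i ≤ n) : θ i ∈ Set.Icc (α + 2 * π / 3) (α + 4 * π / 3) :=
    hs (θ i) (by rw [← Finset.mem_coe, ← hθ]; exact ⟨i, hi, rfl⟩)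
  have hfirst := (hmem (Nat.zero_le n)).1
  have hlast := (hmem le_rfl).2
  rw [← hθ, volume_real_convexHull_circlePt (hmono.monotoneOn _) (by linarith [pi_pos])
    (by linarith [pi_pos]), ← sin_add_two_pi (α - θ n)]
  have := sin_add_sum_sin_add_sin_le (s := Finset.range n) (by simpa)
    (t := fun i ↦ θ (i + 1) - θ i) (fun i _ ↦ sub_nonneg.2 (hmono i.le_succ))
    (x := θ 0 - α) (y := α - θ n + 2 * π) (by linarith) (by linarith)
    (by rw [Finset.sum_range_sub]; ring)
  rw [Finset.card_range] at this
  linarith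

/-! ### Polygons in `M` -/

/-- The vertex `(0, −1)` of `M` shared by its two chords. -/
def apex : Pt := circlePt (-(π / 2))

/-- The arc of `120°` opposite to the vertex `(0, −1)` in the boundary of `M`. -/
def arc : Set Pt := circlePt '' Set.Icc (π / 6) (5 * π / 6)

theorem apex_zero : apex 0 = 0 := by simp [apex]

theorem apex_one : apex 1 = -1 := by simp [apex]

theorem injOn_circlePt : Set.InjOn circlePt (Set.Icc 0 π) := fun _ hx _ hy h ↦
  injOn_cos hx hy (congrArg (· 0) h)

theorem half_le_sin_iff {θ : ℝ} (hθ : θ ∈ Set.Icc 0 π) :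
    1 / 2 ≤ sin θ ↔ θ ∈ Set.Icc (π / 6) (5 * π / 6) := by
  have hmem : |π / 2 - θ| ∈ Set.Icc 0 π :=
    ⟨abs_nonneg _, abs_le.2 ⟨by linarith [hθ.2, pi_pos], by linarith [hθ.1, pi_pos]⟩⟩
  rw [← cos_pi_div_three, ← cos_pi_div_two_sub, ← cos_abs (π / 2 - θ),
    strictAntiOn_cos.le_iff_ge ⟨by positivity, by linarith [pi_pos]⟩ hmem, abs_le, Set.mem_Icc]
  constructor <;> rintro ⟨h, h'⟩ <;> constructor <;> linarith

theorem mem_arc_iff {p : Pt} : p ∈ arc ↔ p 0 ^ 2 + p 1 ^ 2 = 1 ∧ 1 / 2 ≤ p 1 := by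
  constructor
  · rintro ⟨θ, hθ, rfl⟩
    exact ⟨cos_sq_add_sin_sq θ,
      (half_le_sin_iff ⟨by linarith [hθ.1, pi_pos], by linarith [hθ.2, pi_pos]⟩).2 hθ⟩
  · rintro ⟨hp, h⟩
    have hcos : cos (arccos (p 0)) = p 0 := cos_arccos (by nlinarith) (by nlinarith)
    have hsin : sin (arccos (p 0)) = p 1 := by
      rw [sin_arccos, ← hp, add_sub_cancel_left, sqrt_sq (by linarith)]
    refine ⟨arccos (p 0), ?_, by ext i; fin_cases i <;> simp [hsin, hcos]⟩
    exact (half_le_sin_iff ⟨arccos_nonneg _, arccos_le_pi _⟩).1 (hsin ▸ h)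

theorem arc_subset_rectangle :
    arc ⊆ WithLp.ofLp ⁻¹' Set.Icc ![-(√3 / 2), 1 / 2] ![√3 / 2, 1] := fun p hp ↦ by
  obtain ⟨hcircle, hp⟩ := mem_arc_iff.1 hp
  obtain ⟨hge, hle⟩ : -(√3 / 2) ≤ p 0 ∧ p 0 ≤ √3 / 2 := by
    refine abs_le_of_sq_le_sq' ?_ (by positivity)
    rw [div_pow, sq_sqrt three_pos.le]
    nlinarith
  have hp' : p 1 ≤ 1 := by nlinarith [sq_nonneg (p 0)]
  exact ⟨Fin.forall_fin_two.2 ⟨hge, hp⟩, Fin.forall_fin_two.2 ⟨hle, hp'⟩⟩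

theorem arc_subset_M : arc ⊆ M := fun p hp ↦ by
  have hge := (arc_subset_rectangle hp).1 0
  have hle := (arc_subset_rectangle hp).2 0
  obtain ⟨hcircle, hp⟩ := mem_arc_iff.1 hp
  have h3 : √3 * √3 = 3 := mul_self_sqrt three_pos.le
  simp only [Matrix.cons_val_zero] at hge hle
  refine ⟨hcircle.le, ?_, ?_⟩ <;> nlinarith [sqrt_nonneg 3]

theorem apex_mem_M : apex ∈ M := by
  simp [M, apex_zero, apex_one]

theorem three_mul_sq_le_of_mem_M {p : Pt} (hp : p ∈ M) : 3 * p 0 ^ 2 ≤ (p 1 + 1) ^ 2 := by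
  obtain ⟨-, hr, hl⟩ := hp
  rw [← Real.sq_sqrt three_pos.le, ← mul_pow]
  exact sq_le_sq' (by linarith) (by linarith)

theorem M_subset_convexHull : M ⊆ convexHull ℝ (insert apex arc) := fun p hp ↦ by
  have hdisk : p 0 ^ 2 + (p 1 + 1) ^ 2 ≤ 2 * (p 1 + 1) := by linarith [hp.1]
  have hcone := three_mul_sq_le_of_mem_M hp
  set h := p 1 + 1 with h_def
  have apex_mem : apex ∈ convexHull ℝ (insert apex arc) :=
    subset_convexHull ℝ _ (Set.mem_insert _ _)
  obtain h0 | h0 : h = 0 ∨ 0 < h :=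
    (by linarith [sq_nonneg (p 0), sq_nonneg h] : 0 ≤ h).eq_or_lt'
  · convert apex_mem
    ext i
    fin_cases i
    · simpa [apex_zero] using (by nlinarith : p 0 ^ 2 = 0)
    · simpa [apex_one] using (by linarith [h_def] : p 1 = -1)
  have hd : 0 < p 0 ^ 2 + h ^ 2 := by positivity
  -- `q` is the second intersection of the line through `apex` and `p` with the unit circle.
  let q : Pt := !₂[2 * h / (p 0 ^ 2 + h ^ 2) * p 0, 2 * h / (p 0 ^ 2 + h ^ 2) * h - 1]
  have hq : q ∈ arc := by
    refine mem_arc_iff.2 ⟨?_, ?_⟩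
    · simp [q]
      field_simp
      ring
    · have : 3 / 2 ≤ 2 * h / (p 0 ^ 2 + h ^ 2) * h := by
        rw [div_mul_eq_mul_div, le_div_iff₀ hd]
        linarith
      simp only [q, Matrix.cons_val_one, Matrix.cons_val_fin_one]
      linarith
  refine (convex_convexHull ℝ _).segment_subset apex_mem
    (subset_convexHull ℝ _ (Set.mem_insert_of_mem _ hq))
    ⟨1 - (p 0 ^ 2 + h ^ 2) / (2 * h), (p 0 ^ 2 + h ^ 2) / (2 * h), ?_, by positivity, by ring, ?_⟩
  · exact sub_nonneg.2 (div_le_one_of_le₀ hdisk (by positivity))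
  · ext i
    fin_cases i <;> simp [q, apex_zero, apex_one] <;> field_simp
    linarith

theorem volume_real_convexHull_le_of_subset_arc {s : Set Pt} (hs : s ⊆ arc) :
    volume.real (convexHull ℝ s) ≤ √3 / 2 := by
  let R : Set (Fin 2 → ℝ) := Set.Icc ![-(√3 / 2), 1 / 2] ![√3 / 2, 1]
  have hull_subset : convexHull ℝ s ⊆ WithLp.ofLp ⁻¹' R :=
    convexHull_min (hs.trans arc_subset_rectangle)
      ((convex_Icc _ _).linear_preimage (WithLp.linearEquiv 2 ℝ (Fin 2 → ℝ)).toLinearMap)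
  have volume_eq : volume ((WithLp.ofLp : Pt → Fin 2 → ℝ) ⁻¹' R) = volume R :=
    (PiLp.volume_preserving_ofLp (Fin 2)).measure_preimage measurableSet_Icc.nullMeasurableSet
  have volume_R : volume.real R = √3 / 2 := by
    rw [measureReal_def, Real.volume_Icc_pi_toReal]
    · simp [Fin.prod_univ_two]
      ring
    · exact Fin.forall_fin_two.2 ⟨neg_le_self (by positivity), one_half_lt_one.le⟩
  rw [← volume_R, measureReal_def, measureReal_def, ← volume_eq]
  exact ENNReal.toReal_mono (volume_eq ▸ isCompact_Icc.measure_ne_top) (measure_mono hull_subset)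

theorem volume_real_convexHull_insert_apex_le {A : Finset Pt} (hA : ↑A ⊆ arc) {k : ℕ}
    (hk : k ≠ 0) (hcard : A.card ≤ k + 1) :
    volume.real (convexHull ℝ (insert apex ↑A)) ≤ (√3 + k * sin (2 * π / (3 * k))) / 2 := by
  obtain ⟨s, hs, rfl⟩ := Finset.subset_set_image_iff.1 hA
  rw [Finset.card_image_of_injOn (injOn_circlePt.mono (hs.trans
    (Set.Icc_subset_Icc (by positivity) (by linarith [pi_pos]))))] at hcard
  rw [Finset.coe_image]
  refine volume_real_convexHull_circlePt_le (fun θ hθ ↦ ?_) hk hcard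
  convert hs hθ using 2 <;> ring

theorem volume_real_convexHull_le_of_subset_M {S : Finset Pt} (hS : ↑S ⊆ M) {k : ℕ} (hk : k ≠ 0)
    (hcard : S.card ≤ k + 2) :
    volume.real (convexHull ℝ (S : Set Pt)) ≤ (√3 + k * sin (2 * π / (3 * k))) / 2 := by
  classical
  obtain ⟨T, hT, hTS, hST⟩ :=
    exists_finset_subset_measureReal_convexHull_le volume (hS.trans M_subset_convexHull)
  refine hST.trans ?_
  by_cases hapex : apex ∈ T
  · rw [← Finset.insert_erase hapex, Finset.coe_insert]
    refine volume_real_convexHull_insert_apex_le ?_ hk ?_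
    · rwa [Finset.coe_erase, Set.sdiff_singleton_subset_iff]
    · rw [Finset.card_erase_of_mem hapex]
      omega
  · have := volume_real_convexHull_le_of_subset_arc
      ((Set.subset_insert_iff_of_notMem (by simpa)).1 hT)
    have := mul_nonneg k.cast_nonneg (sin_two_pi_div_nonneg k)
    linarith

theorem exists_finset_subset_M_volume_real_eq {k : ℕ} (hk : k ≠ 0) :
    ∃ S : Finset Pt, ↑S ⊆ M ∧ S.card ≤ k + 2 ∧
      volume.real (convexHull ℝ (S : Set Pt)) = (√3 + k * sin (2 * π / (3 * k))) / 2 := by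
  classical
  let θ (i : ℕ) : ℝ := π / 6 + i * (2 * π / (3 * k))
  have hmono : Monotone θ := fun i j hij ↦ by
    simp only [θ]
    gcongr
  have hfirst : θ 0 = π / 6 := by simp [θ]
  have hlast : θ k = 5 * π / 6 := by
    simp only [θ]
    field_simp
    norm_num
  refine ⟨insert apex ((Finset.Iic k).image (circlePt ∘ θ)), ?_, ?_, ?_⟩
  · rw [Finset.coe_insert, Finset.coe_image, Set.image_comp, Finset.coe_Iic]
    refine Set.insert_subset apex_mem_M (.trans (Set.image_mono ?_) arc_subset_M)
    rintro _ ⟨i, hi, rfl⟩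
    exact ⟨hfirst ▸ hmono i.zero_le, hlast ▸ hmono hi⟩
  · exact (Finset.card_insert_le _ _).trans
      (Nat.succ_le_succ (Finset.card_image_le.trans_eq (Nat.card_Iic k)))
  · have gap (i : ℕ) : θ (i + 1) - θ i = 2 * π / (3 * k) := by
      simp only [θ]
      push_cast
      ring
    have first_gap : π / 6 - -(π / 2) = 2 * π / 3 := by ring
    have last_gap : -(π / 2) - 5 * π / 6 = 2 * π / 3 - 2 * π := by ring
    rw [Finset.coe_insert, Finset.coe_image, Set.image_comp, Finset.coe_Iic, apex,
      volume_real_convexHull_circlePt (hmono.monotoneOn _) (by linarith [pi_pos])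
        (by linarith [pi_pos]), hfirst, hlast, first_gap, last_gap, sin_sub_two_pi,
      sin_two_pi_div_three]
    simp only [gap, Finset.sum_const, Finset.card_range, nsmul_eq_mul]
    ring

/-- Explicit formula for the area of the largest `n`-gon inscribed in `M`. -/
theorem astar_eq (n : ℕ) (hn : 3 ≤ n) :
    astar n = Real.sqrt 3 / 2 + (((n : ℝ) - 2) / 2) * Real.sin (2 * π / (3 * ((n : ℝ) - 2))) := by
  obtain ⟨k, rfl⟩ := Nat.exists_eq_add_of_le' (Nat.le_of_succ_le hn)
  have hk : k ≠ 0 := by omega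
  have hgreatest : IsGreatest {a : ℝ | ∃ S : Finset Pt, (S : Set Pt) ⊆ M ∧ S.card ≤ k + 2 ∧
      a = volume.real (convexHull ℝ (S : Set Pt))} ((√3 + k * sin (2 * π / (3 * k))) / 2) := by
    refine ⟨?_, ?_⟩
    · obtain ⟨S, hSM, hcard, hS⟩ := exists_finset_subset_M_volume_real_eq hk
      exact ⟨S, hSM, hcard, hS.symm⟩
    · rintro _ ⟨S, hSM, hcard, rfl⟩
      exact volume_real_convexHull_le_of_subset_M hSM hk hcard
  have hk_cast : ((k + 2 : ℕ) : ℝ) - 2 = k := by push_cast; ring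
  rw [hk_cast, show astar (k + 2) = _ from hgreatest.csSup_eq]
  ring
end
end
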